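/- For n ≥ 2 define f_n : ℝ → ℝ by f_n(y) = [ Γ(n/2) / ( √π Γ((n−1)/2) √n ) ] · (1 − y²/n)^{(n−3)/2} · 1_{[−√n, √n]}(y). Then each f_n is a probability density on ℝ, and for every y ∈ ℝ, f_n(y) → (1/√(2π)) e^{−y²/2} as n → ∞; in particular Γ(n/2) / ( √π Γ((n−1)/2) √n ) → 1/√(2π). -/

import Mathlib

/-!
The normalization is a symmetric beta integral: with `α = (n - 1) / 2`, the affine substitution
`y = √n (2x - 1)` turns `1 - y² / n` into `4 x (1 - x)`, so that
`∫_{-√n}^{√n} (1 - y² / n)^(α - 1) dy = 2 √n 4^(α - 1) B(α, α)`, and Legendre's duplication formula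
rewrites this as `√n √π Γ(α) / Γ(α + 1/2)` (`integral_one_sub_sq_div_rpow`).

For the limit of the constant, midpoint log-convexity of `Γ`, applied at `x + 1/2` and at `x`, gives
`√(x - 1/2) ≤ Γ(x + 1/2) / Γ(x) ≤ √x`; take `x = (n - 1) / 2` and squeeze.
The remaining factor is written `((1 - y² / n)^n)^(1/2) (1 - y² / n)^(-3/2)`, which tends to
`(e^(-y²))^(1/2) · 1`.
-/

open MeasureTheory Real Filter Topology

/-- The densities `f_n(y) = Γ(n/2)/(√π Γ((n-1)/2) √n) (1 - y²/n)^{(n-3)/2} 1_{[-√n,√n]}(y)`. -/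
noncomputable def sphereDensity (n : ℕ) (y : ℝ) : ℝ :=
  Set.indicator (Set.Icc (-Real.sqrt n) (Real.sqrt n))
    (fun y => Real.Gamma (n / 2) / (Real.sqrt π * Real.Gamma ((n - 1) / 2) * Real.sqrt n) *
      (1 - y ^ 2 / n) ^ (((n : ℝ) - 3) / 2)) y

/-- The real form of the symmetric beta integral. -/
lemma integral_rpow_mul_one_sub_rpow {α : ℝ} (hα : 0 < α) :
    ∫ x in (0 : ℝ)..1, x ^ (α - 1) * (1 - x) ^ (α - 1) =
      Real.Gamma α * Real.Gamma α / Real.Gamma (2 * α) := by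
  have h := ProbabilityTheory.beta_eq_betaIntegralReal α α hα hα
  have hC : Complex.betaIntegral α α =
      ((∫ x in (0 : ℝ)..1, x ^ (α - 1) * (1 - x) ^ (α - 1) : ℝ) : ℂ) := by
    rw [Complex.betaIntegral, ← intervalIntegral.integral_ofReal]
    refine intervalIntegral.integral_congr fun x hx => ?_
    rw [Set.uIcc_of_le zero_le_one] at hx
    have h1 : 0 ≤ 1 - x := by linarith [hx.2]
    rw [Complex.ofReal_mul, Complex.ofReal_cpow hx.1, Complex.ofReal_cpow h1]
    push_cast
    rfl
  rw [hC, Complex.ofReal_re, ProbabilityTheory.beta] at h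
  rw [← h, two_mul]

lemma integral_one_sub_sq_div_rpow {N α : ℝ} (hN : 0 < N) (hα : 0 < α) :
    ∫ y in (-√N)..√N, (1 - y ^ 2 / N) ^ (α - 1) =
      √N * √π * Real.Gamma α / Real.Gamma (α + 1 / 2) := by
  have hs : √N ^ 2 = N := Real.sq_sqrt hN.le
  have hsub := intervalIntegral.smul_integral_comp_mul_add (a := 0) (b := 1)
    (fun y : ℝ => (1 - y ^ 2 / N) ^ (α - 1)) (2 * √N) (-√N)
  rw [show 2 * √N * 0 + -√N = -√N by ring, show 2 * √N * 1 + -√N = √N by ring] at hsub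
  have hpt : ∫ x in (0 : ℝ)..1, (1 - (2 * √N * x + -√N) ^ 2 / N) ^ (α - 1) =
      ∫ x in (0 : ℝ)..1, 4 ^ (α - 1) * (x ^ (α - 1) * (1 - x) ^ (α - 1)) := by
    refine intervalIntegral.integral_congr fun x hx => ?_
    rw [Set.uIcc_of_le zero_le_one] at hx
    have h1 : 0 ≤ 1 - x := by linarith [hx.2]
    rw [← Real.mul_rpow hx.1 h1, ← Real.mul_rpow (by norm_num) (mul_nonneg hx.1 h1)]
    congr 1
    rw [show (2 * √N * x + -√N) ^ 2 = √N ^ 2 * (2 * x - 1) ^ 2 by ring, hs,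
      mul_div_cancel_left₀ _ hN.ne']
    ring
  rw [← hsub, hpt, intervalIntegral.integral_const_mul, integral_rpow_mul_one_sub_rpow hα,
    smul_eq_mul]
  have hdup := Real.Gamma_mul_Gamma_add_half α
  have hpow : 2 * (4 : ℝ) ^ (α - 1) * 2 ^ (1 - 2 * α) = 1 := by
    rw [show (4 : ℝ) = 2 ^ (2 : ℝ) by norm_num, ← Real.rpow_mul (by norm_num)]
    nth_rewrite 1 [← Real.rpow_one 2]
    rw [← Real.rpow_add two_pos, ← Real.rpow_add two_pos]
    ring_nf
    exact Real.rpow_zero 2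
  have g2 : Real.Gamma (2 * α) ≠ 0 := (Real.Gamma_pos_of_pos (by positivity)).ne'
  have g3 : Real.Gamma (α + 1 / 2) ≠ 0 := (Real.Gamma_pos_of_pos (by positivity)).ne'
  rw [mul_div_assoc', mul_div_assoc', div_eq_div_iff g2 g3]
  linear_combination (2 * √N * 4 ^ (α - 1) * Real.Gamma α) * hdup +
    (√N * Real.Gamma α * Real.Gamma (2 * α) * √π) * hpow

/-- Midpoint log-convexity of `Γ`. -/
lemma Gamma_add_half_sq_le {x : ℝ} (hx : 0 < x) :
    Real.Gamma (x + 1 / 2) ^ 2 ≤ Real.Gamma x * Real.Gamma (x + 1) := by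
  have h := Real.Gamma_mul_add_mul_le_rpow_Gamma_mul_rpow_Gamma hx (by linarith : 0 < x + 1)
    one_half_pos one_half_pos (by norm_num)
  have g1 := (Real.Gamma_pos_of_pos hx).le
  have g2 := (Real.Gamma_pos_of_pos (by linarith : 0 < x + 1)).le
  rw [show 1 / 2 * x + 1 / 2 * (x + 1) = x + 1 / 2 by ring, ← Real.mul_rpow g1 g2,
    ← Real.sqrt_eq_rpow] at h
  exact (Real.le_sqrt (Real.Gamma_pos_of_pos (by positivity)).le (mul_nonneg g1 g2)).1 h

lemma Gamma_ratio_le {x : ℝ} (hx : 0 < x) :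
    Real.Gamma (x + 1 / 2) / Real.Gamma x ≤ √x := by
  have g := Real.Gamma_pos_of_pos hx
  have h := Gamma_add_half_sq_le hx
  rw [Real.Gamma_add_one hx.ne'] at h
  apply Real.le_sqrt_of_sq_le
  rw [div_pow, div_le_iff₀ (by positivity)]
  linarith

lemma le_Gamma_ratio {x : ℝ} (hx : 1 / 2 < x) :
    √(x - 1 / 2) ≤ Real.Gamma (x + 1 / 2) / Real.Gamma x := by
  have hx' : 0 < x - 1 / 2 := by linarith
  have g := Real.Gamma_pos_of_pos (by linarith : 0 < x)
  have g' := Real.Gamma_pos_of_pos (by linarith : 0 < x + 1 / 2)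
  have h := Gamma_add_half_sq_le hx'
  have hrec := Real.Gamma_add_one hx'.ne'
  rw [show x - 1 / 2 + 1 / 2 = x by ring] at h
  rw [show x - 1 / 2 + 1 = x + 1 / 2 by ring] at h hrec
  apply Real.sqrt_le_iff.2 ⟨by positivity, ?_⟩
  rw [div_pow, le_div_iff₀ (by positivity)]
  calc (x - 1 / 2) * Real.Gamma x ^ 2
      ≤ (x - 1 / 2) * (Real.Gamma (x - 1 / 2) * Real.Gamma (x + 1 / 2)) := by gcongr
    _ = Real.Gamma (x + 1 / 2) ^ 2 := by rw [← mul_assoc, ← hrec]; ring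

lemma tendsto_one_sub_div_natCast (c : ℝ) :
    Tendsto (fun n : ℕ => 1 - c / (n : ℝ)) atTop (𝓝 1) := by
  simpa using (tendsto_const_div_atTop_nhds_zero_nat c).const_sub 1

lemma tendsto_sphereConst :
    Tendsto (fun n : ℕ =>
        Real.Gamma (n / 2) / (Real.sqrt π * Real.Gamma ((n - 1) / 2) * Real.sqrt n))
      atTop (𝓝 (1 / Real.sqrt (2 * π))) := by
  have hlim : ∀ c : ℝ, Tendsto (fun n : ℕ => √((1 - c / (n : ℝ)) / (2 * π))) atTop
      (𝓝 (1 / √(2 * π))) := by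
    intro c
    have := ((tendsto_one_sub_div_natCast c).div_const (2 * π)).sqrt
    rwa [Real.sqrt_div zero_le_one, Real.sqrt_one] at this
  have hid : ∀ (n : ℕ) (c : ℝ), 3 ≤ n → √((1 - c / (n : ℝ)) / (2 * π)) =
      √(((n : ℝ) - c) / 2) / (√π * √n) := by
    intro n c hn
    have hn' : (0 : ℝ) < n := by exact_mod_cast (by lia : 0 < n)
    rw [← Real.sqrt_mul pi_pos.le, ← Real.sqrt_div' _ (by positivity)]
    congr 1
    field_simp
  have hratio : ∀ n : ℕ, 3 ≤ n →
      Real.Gamma (n / 2) / (√π * Real.Gamma ((n - 1) / 2) * √n) =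
      Real.Gamma (((n : ℝ) - 1) / 2 + 1 / 2) / Real.Gamma ((n - 1) / 2) / (√π * √n) := by
    intro n hn
    rw [show ((n : ℝ) - 1) / 2 + 1 / 2 = n / 2 by ring, div_div]
    congr 1
    ring
  refine tendsto_of_tendsto_of_tendsto_of_le_of_le' (hlim 2) (hlim 1) ?_ ?_
  · filter_upwards [eventually_ge_atTop 3] with n hn
    have hn' : (3 : ℝ) ≤ n := by exact_mod_cast hn
    rw [hid n 2 hn, hratio n hn, show ((n : ℝ) - 2) / 2 = (n - 1) / 2 - 1 / 2 by ring]
    gcongr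
    exact le_Gamma_ratio (by linarith)
  · filter_upwards [eventually_ge_atTop 3] with n hn
    have hn' : (3 : ℝ) ≤ n := by exact_mod_cast hn
    rw [hid n 1 hn, hratio n hn]
    gcongr
    exact Gamma_ratio_le (by linarith)

lemma tendsto_one_sub_sq_div_rpow (y : ℝ) :
    Tendsto (fun n : ℕ => (1 - y ^ 2 / (n : ℝ)) ^ (((n : ℝ) - 3) / 2)) atTop
      (𝓝 (Real.exp (-y ^ 2 / 2))) := by
  have hbase := tendsto_one_sub_div_natCast (y ^ 2)
  have h1 : Tendsto (fun n : ℕ => ((1 - y ^ 2 / (n : ℝ)) ^ n) ^ (1 / 2 : ℝ)) atTop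
      (𝓝 (Real.exp (-y ^ 2) ^ (1 / 2 : ℝ))) := by
    refine Tendsto.rpow_const ?_ (Or.inr (by norm_num))
    simpa [neg_div, ← sub_eq_add_neg] using Real.tendsto_one_add_div_pow_exp (-y ^ 2)
  have h2 : Tendsto (fun n : ℕ => (1 - y ^ 2 / (n : ℝ)) ^ (-3 / 2 : ℝ)) atTop (𝓝 1) := by
    simpa using hbase.rpow_const (p := (-3 / 2 : ℝ)) (Or.inl one_ne_zero)
  have h := h1.mul h2
  rw [mul_one, ← Real.exp_mul, mul_one_div] at h
  refine h.congr' ?_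
  filter_upwards [hbase.eventually (lt_mem_nhds zero_lt_one)] with n hn
  rw [← Real.rpow_natCast, ← Real.rpow_mul hn.le, ← Real.rpow_add hn]
  congr 1
  ring

/-- **The densities `f_n` are probability densities converging pointwise to the standard
Gaussian density.** -/
theorem sphereDensity_tendsto_gaussian :
    (∀ n : ℕ, 2 ≤ n →
      (∀ y : ℝ, 0 ≤ sphereDensity n y) ∧ ∫ y : ℝ, sphereDensity n y = 1) ∧
    (∀ y : ℝ, Tendsto (fun n : ℕ => sphereDensity n y) atTop
      (𝓝 (1 / Real.sqrt (2 * π) * Real.exp (-y ^ 2 / 2)))) ∧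
    Tendsto (fun n : ℕ =>
        Real.Gamma (n / 2) / (Real.sqrt π * Real.Gamma ((n - 1) / 2) * Real.sqrt n))
      atTop (𝓝 (1 / Real.sqrt (2 * π))) := by
  refine ⟨fun n hn => ?_, fun y => ?_, tendsto_sphereConst⟩
  · have hn' : (2 : ℝ) ≤ n := by exact_mod_cast hn
    have hN : (0 : ℝ) < n := by linarith
    have hα : 0 < ((n : ℝ) - 1) / 2 := by linarith
    have g1 := Real.Gamma_pos_of_pos hα
    have g2 := Real.Gamma_pos_of_pos (half_pos hN)
    refine ⟨fun y => Set.indicator_nonneg (fun y hy => ?_) y, ?_⟩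
    · have hy2 : y ^ 2 ≤ n := by
        rw [← Real.sq_sqrt hN.le]
        exact sq_le_sq' hy.1 hy.2
      have : 0 ≤ 1 - y ^ 2 / n := by
        rw [sub_nonneg, div_le_one hN]
        exact hy2
      positivity
    · have hint := integral_one_sub_sq_div_rpow hN hα
      rw [show ((n : ℝ) - 1) / 2 - 1 = (n - 3) / 2 by ring,
        show ((n : ℝ) - 1) / 2 + 1 / 2 = n / 2 by ring] at hint
      unfold sphereDensity
      rw [integral_indicator measurableSet_Icc, integral_Icc_eq_integral_Ioc,
        ← intervalIntegral.integral_of_le (by linarith [Real.sqrt_nonneg (n : ℝ)]),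
        intervalIntegral.integral_const_mul, hint]
      have hπ : √π ≠ 0 := (Real.sqrt_pos.2 pi_pos).ne'
      have hs : √(n : ℝ) ≠ 0 := (Real.sqrt_pos.2 hN).ne'
      field_simp
  · refine (tendsto_sphereConst.mul (tendsto_one_sub_sq_div_rpow y)).congr' ?_
    -- the point `y` lies in the support `[-√n, √n]` as soon as `y² ≤ n`
    filter_upwards [tendsto_natCast_atTop_atTop.eventually_ge_atTop (y ^ 2)] with n hn
    have hy : y ∈ Set.Icc (-√(n : ℝ)) √n := abs_le.1 (Real.abs_le_sqrt hn)
    rw [sphereDensity, Set.indicator_of_mem hy]
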